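/- Let F be a finite field with q elements, let r ≥ 2, and let b₁, …, b_r be an affine basis of the affine space F^(r−1). Then the number of affine hyperplanes H of F^(r−1) (affine subspaces of dimension r−2) such that bᵢ ∉ H for every i = 1, …, r is exactly (q−1)^(r−1) − 1. -/

import Mathlib

/-- The affine function with prescribed values `c i` at the basis points. -/
noncomputable def affFn {F V : Type*} [Field F] [AddCommGroup V] [Module F V] {n : ℕ}
    (b : AffineBasis (Fin (n + 1)) F V) (c : Fin (n + 1) → F) : V →ᵃ[F] F :=
  (Fintype.linearCombination F c).toAffineMap.comp b.coords

theorem affFn_apply {F V : Type*} [Field F] [AddCommGroup V] [Module F V] {n : ℕ}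
    (b : AffineBasis (Fin (n + 1)) F V) (c : Fin (n + 1) → F) (x : V) :
    affFn b c x = ∑ i, b.coord i x * c i := by
  simp [affFn, Fintype.linearCombination_apply]

theorem affFn_basis {F V : Type*} [Field F] [AddCommGroup V] [Module F V] {n : ℕ}
    (b : AffineBasis (Fin (n + 1)) F V) (c : Fin (n + 1) → F) (i : Fin (n + 1)) :
    affFn b c (b i) = c i := by
  classical
  simp [affFn_apply, AffineBasis.coord_apply]

theorem affFn_eq {F V : Type*} [Field F] [AddCommGroup V] [Module F V] {n : ℕ}
    (b : AffineBasis (Fin (n + 1)) F V) (f : V →ᵃ[F] F) (x : V) :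
    affFn b (fun i => f (b i)) x = f x := by
  rw [affFn_apply]
  conv_rhs => rw [← b.affineCombination_coord_eq_self x]
  rw [Finset.map_affineCombination _ _ _ (b.sum_coord_apply_eq_one x),
    Finset.affineCombination_eq_linear_combination _ _ _ (b.sum_coord_apply_eq_one x)]
  simp

/-- The zero set of an affine function. -/
def zeroSet {F V : Type*} [Field F] [AddCommGroup V] [Module F V] (f : V →ᵃ[F] F) :
    AffineSubspace F V := (AffineSubspace.mk' (0 : F) ⊥).comap f

theorem mem_zeroSet {F V : Type*} [Field F] [AddCommGroup V] [Module F V] (f : V →ᵃ[F] F)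
    (x : V) : x ∈ zeroSet f ↔ f x = 0 := by
  simp [zeroSet, AffineSubspace.mem_comap]

theorem map_add_smul {F V : Type*} [Field F] [AddCommGroup V] [Module F V] (f : V →ᵃ[F] F)
    (x v : V) (a : F) : f (a • v + x) = a * f.linear v + f x := by
  have := f.map_vadd x (a • v)
  simpa using this

theorem linear_sub {F V : Type*} [Field F] [AddCommGroup V] [Module F V] (f : V →ᵃ[F] F)
    (x y : V) : f.linear (x - y) = f x - f y := by
  have := f.linearMap_vsub x y
  simpa using this

theorem direction_zeroSet {F V : Type*} [Field F] [AddCommGroup V] [Module F V]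
    (f : V →ᵃ[F] F) (p : V) (hp : f p = 0) :
    (zeroSet f).direction = LinearMap.ker f.linear := by
  ext v
  rw [← AffineSubspace.vadd_mem_iff_mem_direction v ((mem_zeroSet f p).2 hp), mem_zeroSet,
    LinearMap.mem_ker]
  have := map_add_smul f p v 1
  simp only [one_smul, one_mul, hp, add_zero] at this
  rw [vadd_eq_add, this]

theorem eq_of_zeroSet_eq {F V : Type*} [Field F] [AddCommGroup V] [Module F V]
    (f g : V →ᵃ[F] F) (o p : V) (hp : f p = 0) (hf : f o = 1) (hg : g o = 1)
    (h : zeroSet f = zeroSet g) (x : V) : f x = g x := by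
  have key : ∀ y, f y = 0 ↔ g y = 0 := fun y => by rw [← mem_zeroSet, ← mem_zeroSet, h]
  have hp' := (key p).1 hp
  have h1 := map_add_smul f x (o - p) (- f x)
  rw [linear_sub, hf, hp] at h1
  have h2 := map_add_smul g x (o - p) (- f x)
  rw [linear_sub, hg, hp', (key _).1 (by rw [h1]; ring)] at h2
  linear_combination h2

theorem exists_of_hyperplane {F V : Type*} [Field F] [AddCommGroup V] [Module F V]
    [FiniteDimensional F V] {n : ℕ} (hn : 1 ≤ n) (hV : Module.finrank F V = n)
    (H : AffineSubspace F V) (p : V) (hp : p ∈ H) (hH : Module.finrank F H.direction = n - 1)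
    (o : V) (ho : o ∉ H) : ∃ f : V →ᵃ[F] F, f o = 1 ∧ zeroSet f = H := by
  have hq : Module.finrank F (V ⧸ H.direction) = Module.finrank F F := by
    have := H.direction.finrank_quotient_add_finrank
    rw [Module.finrank_self]; omega
  let e := LinearEquiv.ofFinrankEq (V ⧸ H.direction) F hq
  let g : V →ₗ[F] F := e.toLinearMap.comp H.direction.mkQ
  have hg : ∀ v, g v = 0 ↔ v ∈ H.direction := fun v => by simp [g]
  have hgH : ∀ x, g (x - p) = 0 ↔ x ∈ H := fun x => by
    rw [hg, ← AffineSubspace.vsub_right_mem_direction_iff_mem hp, vsub_eq_sub]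
  have ha : g (o - p) ≠ 0 := fun h => ho ((hgH o).1 h)
  let f : V →ᵃ[F] F := ((g (o - p))⁻¹ • g).toAffineMap.comp
    (AffineMap.id F V - AffineMap.const F V p)
  have hf : ∀ x, f x = (g (o - p))⁻¹ * g (x - p) := fun x => by simp [f]
  refine ⟨f, by rw [hf, inv_mul_cancel₀ ha], ?_⟩
  ext x
  rw [mem_zeroSet, hf, ← hgH]
  exact mul_eq_zero_iff_left (inv_ne_zero ha)

/-- Values at the basis points. -/
def vals {F : Type*} [Field F] {n : ℕ} (u : Fin n → Fˣ) : Fin (n + 1) → F :=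
  Fin.cons 1 (fun i => (u i : F))

theorem vals_ne {F : Type*} [Field F] {n : ℕ} (u : Fin n → Fˣ) (i : Fin (n + 1)) :
    vals u i ≠ 0 := by
  refine Fin.cases ?_ (fun j => ?_) i <;> simp [vals]

theorem linear_surj {F V : Type*} [Field F] [AddCommGroup V] [Module F V] {n : ℕ}
    (b : AffineBasis (Fin (n + 1)) F V) (u : Fin n → Fˣ) (hu : u ≠ 1) :
    Function.Surjective (affFn b (vals u)).linear := by
  apply LinearMap.surjective
  intro h
  apply hu
  ext i
  have := linear_sub (affFn b (vals u)) (b i.succ) (b 0)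
  rw [h, affFn_basis, affFn_basis] at this
  simp [vals] at this
  simpa using (sub_eq_zero.1 this.symm)

theorem exists_zero {F V : Type*} [Field F] [AddCommGroup V] [Module F V] {n : ℕ}
    (b : AffineBasis (Fin (n + 1)) F V) (u : Fin n → Fˣ) (hu : u ≠ 1) :
    ∃ p, affFn b (vals u) p = 0 := by
  obtain ⟨v, hv⟩ := linear_surj b u hu (-1)
  refine ⟨(1 : F) • v + b 0, ?_⟩
  rw [map_add_smul, hv, affFn_basis]
  simp [vals]

theorem count_general {F V : Type*} [Field F] [Fintype F] [AddCommGroup V] [Module F V]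
    [FiniteDimensional F V] {n : ℕ} (hn : 1 ≤ n) (hV : Module.finrank F V = n)
    (b : AffineBasis (Fin (n + 1)) F V) :
    Nat.card {H : AffineSubspace F V | (H : Set V).Nonempty ∧
        Module.finrank F H.direction = n - 1 ∧ ∀ i, b i ∉ H}
      = (Fintype.card F - 1) ^ n - 1 := by
  classical
  have hmem : ∀ u : {u : Fin n → Fˣ // u ≠ 1}, zeroSet (affFn b (vals u.1)) ∈
      {H : AffineSubspace F V | (H : Set V).Nonempty ∧
        Module.finrank F H.direction = n - 1 ∧ ∀ i, b i ∉ H} := by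
    rintro ⟨u, hu⟩
    obtain ⟨p, hp⟩ := exists_zero b u hu
    refine ⟨⟨p, (mem_zeroSet _ _).2 hp⟩, ?_, fun i => ?_⟩
    · rw [direction_zeroSet _ p hp]
      have := LinearMap.finrank_range_add_finrank_ker (affFn b (vals u)).linear
      rw [LinearMap.range_eq_top.2 (linear_surj b u hu), finrank_top, Module.finrank_self] at this
      omega
    · rw [mem_zeroSet, affFn_basis]
      exact vals_ne u i
  have hbij : Function.Bijective (fun u => (⟨_, hmem u⟩ :
      {H : AffineSubspace F V | (H : Set V).Nonempty ∧
        Module.finrank F H.direction = n - 1 ∧ ∀ i, b i ∉ H})) := by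
    constructor
    · rintro ⟨u, hu⟩ ⟨v, hv⟩ h
      have h' : zeroSet (affFn b (vals u)) = zeroSet (affFn b (vals v)) := congrArg Subtype.val h
      obtain ⟨p, hp⟩ := exists_zero b u hu
      have := eq_of_zeroSet_eq _ _ (b 0) p hp (by rw [affFn_basis]; rfl)
        (by rw [affFn_basis]; rfl) h'
      apply Subtype.ext
      funext i
      have := this (b i.succ)
      rw [affFn_basis, affFn_basis] at this
      exact Units.ext (by simpa [vals] using this)
    · rintro ⟨H, ⟨p, hp⟩, hd, hb⟩
      obtain ⟨f, hf0, hfH⟩ := exists_of_hyperplane hn hV H p hp hd (b 0) (hb 0)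
      have hne : ∀ i, f (b i) ≠ 0 := fun i h => hb i (by rw [← hfH, mem_zeroSet, h])
      let u : Fin n → Fˣ := fun i => Units.mk0 (f (b i.succ)) (hne _)
      have hvals : vals u = fun i => f (b i) := by
        funext i
        refine Fin.cases ?_ (fun j => ?_) i <;> simp [vals, hf0, u]
      have hff : affFn b (vals u) = f := by
        ext x
        rw [hvals, affFn_eq]
      have hu : u ≠ 1 := by
        intro h
        have h1 : vals u = fun _ => 1 := by
          rw [h]
          funext i
          refine Fin.cases ?_ (fun j => ?_) i <;> simp [vals]
        have hp0 : f p = 0 := by rw [← mem_zeroSet, hfH]; exact hp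
        rw [← hff, h1, affFn_apply] at hp0
        simp at hp0
      refine ⟨⟨u, hu⟩, Subtype.ext ?_⟩
      change zeroSet (affFn b (vals u)) = H
      rw [hff, hfH]
  rw [← Nat.card_eq_of_bijective _ hbij, Nat.card_eq_fintype_card, Fintype.card_subtype_compl]
  simp [Fintype.card_units]

/-- If `B = {b₁, …, b_r}` is an affine basis of `AG(r-1, q)`, there are precisely
`(q-1)^(r-1) - 1` affine hyperplanes (affine subspaces of dimension `r-2`)
containing no element of `B`. -/
theorem hyperplanes_avoiding_basis_count_AG (F : Type*) [Field F] [Fintype F] (q r : ℕ)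
    (hq : Fintype.card F = q) (hr : 2 ≤ r)
    (b : AffineBasis (Fin r) F (Fin (r - 1) → F)) :
    Nat.card {H : AffineSubspace F (Fin (r - 1) → F) |
        (H : Set (Fin (r - 1) → F)).Nonempty ∧
        Module.finrank F H.direction = r - 2 ∧
        ∀ i, b i ∉ H} = (q - 1) ^ (r - 1) - 1 := by
  obtain ⟨n, rfl⟩ : ∃ n, r = n + 1 := ⟨r - 1, by omega⟩
  subst hq
  exact count_general (V := Fin n → F) (by omega) (by simp) b
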